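/- Define the rescaled functions ũ_{1,p}(r) := p·(u_p(ρ_p¹·r) − u_p(0))/u_p(0), which are defined for 0 ≤ r < 1/ρ_p¹, and let U(r) := log( 4(2+α)⁴ / (2(2+α)² + r^{2+α})² ). Then ũ_{1,p} converges to U in C¹_loc([0,∞)) as p → ∞; that is, for every compact set K ⊂ [0,∞) there is p_K such that K ⊂ [0, 1/ρ_p¹) for all p > p_K, and sup_{r∈K} |ũ_{1,p}(r) − U(r)| → 0 and sup_{r∈K} |ũ_{1,p}′(r) − U′(r)| → 0 as p → ∞. -/

import Mathlib

open Real Set Filter MeasureTheory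

open scoped Topology

/-!
For large `p` the rescaled function `v` solves `(r v')' = -r ^ (1 + α) (1 + v / p) ^ p` with
`v 0 = 0`, up to the rescaled zero of `u_p`. There the right-hand side lies between `-r ^ (1 + α)`
and `0`, so that `-r ^ (2 + α) / (2 + α) ^ 2 ≤ v ≤ 0`. Since `v = -p` at the rescaled zero, that
zero escapes to infinity, and on each `[0, R]` the function `(1 + v / p) ^ p` is `O(1 / p)`-close
to `exp v`. The limit `U` solves the same equation with `exp U` in place of `(1 + v / p) ^ p`, hence
`d = v - U` satisfies `|(r d')'| ≤ r ^ (1 + α) (ε + |d|)` with `ε = O(1 / p)`. A Grönwall argument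
with the barrier `ε exp (c r ^ (2 + α))` bounds `d` and `d'` by multiples of `ε`.
-/

lemma tendstoUniformlyOn_of_dist_le {ι X E : Type*} [PseudoMetricSpace E] {l : Filter ι}
    {F : ι → X → E} {f : X → E} {s : Set X} {b : ι → ℝ} (hb : Tendsto b l (𝓝 0))
    (h : ∀ᶠ i in l, ∀ x ∈ s, dist (F i x) (f x) ≤ b i) : TendstoUniformlyOn F f l s := by
  refine Metric.tendstoUniformlyOn_iff.2 fun ε hε => ?_
  filter_upwards [h, hb.eventually_lt_const hε] with i hi hbi x hx
  rw [dist_comm]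
  exact (hi x hx).trans_lt hbi

lemma eq_zero_of_eventually_nonneg_of_eventually_nonpos {f : ℝ → ℝ} {z : ℝ}
    (hf : ContinuousAt f z) (hl : ∀ᶠ x in 𝓝[<] z, 0 ≤ f x) (hr : ∀ᶠ x in 𝓝[>] z, f x ≤ 0) :
    f z = 0 :=
  (le_of_tendsto (hf.tendsto.mono_left nhdsWithin_le_nhds) hr).antisymm
    (ge_of_tendsto (hf.tendsto.mono_left nhdsWithin_le_nhds) hl)

lemma abs_exp_sub_exp_le_of_nonpos {a b : ℝ} (ha : a ≤ 0) (hb : b ≤ 0) :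
    |exp a - exp b| ≤ |a - b| := by
  have h := (convex_Iic (0 : ℝ)).norm_image_sub_le_of_norm_deriv_le (f := exp) (C := 1)
    (fun x _ => differentiableAt_exp) (fun x hx => by simpa using hx) hb ha
  simpa using h

lemma abs_mul_log_one_add_div_sub_le {p v : ℝ} (hp : 0 < p) (hpv : -p < v) :
    |p * log (1 + v / p) - v| ≤ v ^ 2 / (p + v) := by
  have hpv' : 0 < p + v := by linarith
  have hw : 1 + v / p = (p + v) / p := by field_simp
  have hw0 : 0 < 1 + v / p := hw ▸ by positivity
  have hle : p * log (1 + v / p) ≤ v :=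
    calc p * log (1 + v / p) ≤ p * (1 + v / p - 1) := by gcongr; exact log_le_sub_one_of_pos hw0
      _ = v := by field_simp; ring
  have hge : v - v ^ 2 / (p + v) ≤ p * log (1 + v / p) :=
    calc v - v ^ 2 / (p + v) = p * (1 - (1 + v / p)⁻¹) := by rw [hw]; field_simp; ring
      _ ≤ p * log (1 + v / p) := by gcongr; exact one_sub_inv_le_log_of_pos hw0
  rw [abs_le]
  constructor
  · linarith
  · linarith [div_nonneg (sq_nonneg v) hpv'.le]

lemma abs_one_add_div_rpow_sub_exp_le {p v : ℝ} (hp : 0 < p) (hpv : -p < v) (hv : v ≤ 0) :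
    |(1 + v / p) ^ p - exp v| ≤ v ^ 2 / (p + v) := by
  have hvp : -1 < v / p := by rwa [lt_div_iff₀ hp, neg_one_mul]
  have hlog : p * log (1 + v / p) ≤ 0 :=
    mul_nonpos_of_nonneg_of_nonpos hp.le <|
      log_nonpos (by linarith) (by linarith [div_nonpos_of_nonpos_of_nonneg hv hp.le])
  rw [rpow_def_of_pos (by linarith), mul_comm]
  exact (abs_exp_sub_exp_le_of_nonpos hlog hv).trans (abs_mul_log_one_add_div_sub_le hp hpv)

/-- The equation `(r v')' = r ^ (1 + α) f` on `(0, R)`, that is `Δv = |x| ^ α f` for radial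
functions on a planar disc. Regularity of `v` at the centre is encoded by continuity up to `0` of
`v` and of the flux `r v'`; the factor `r` makes the flux vanish at `0` whatever the value of
`deriv v 0`. -/
structure IsRadialPoisson (α R : ℝ) (v f : ℝ → ℝ) : Prop where
  continuousOn : ContinuousOn v (Icc 0 R)
  differentiableAt : ∀ r ∈ Ioo 0 R, DifferentiableAt ℝ v r
  continuousOn_flux : ContinuousOn (fun r => r * deriv v r) (Ico 0 R)
  hasDerivAt_flux : ∀ r ∈ Ioo 0 R, HasDerivAt (fun r => r * deriv v r) (r ^ (1 + α) * f r) r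

namespace IsRadialPoisson

variable {α R : ℝ} {v w f g : ℝ → ℝ}

lemma congr_right (h : IsRadialPoisson α R v f) (hfg : EqOn f g (Ioo 0 R)) :
    IsRadialPoisson α R v g where
  __ := h
  hasDerivAt_flux r hr := hfg hr ▸ h.hasDerivAt_flux r hr

lemma mono {S : ℝ} (h : IsRadialPoisson α S v f) (hRS : R ≤ S) : IsRadialPoisson α R v f where
  continuousOn := h.continuousOn.mono (Icc_subset_Icc_right hRS)
  differentiableAt r hr := h.differentiableAt r (Ioo_subset_Ioo_right hRS hr)
  continuousOn_flux := h.continuousOn_flux.mono (Ico_subset_Ico_right hRS)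
  hasDerivAt_flux r hr := h.hasDerivAt_flux r (Ioo_subset_Ioo_right hRS hr)

lemma sub_const (h : IsRadialPoisson α R v f) (a : ℝ) :
    IsRadialPoisson α R (fun r => v r - a) f where
  continuousOn := h.continuousOn.sub continuousOn_const
  differentiableAt r hr := (h.differentiableAt r hr).sub_const a
  continuousOn_flux := by simpa only [deriv_sub_const] using h.continuousOn_flux
  hasDerivAt_flux := by simpa only [deriv_sub_const] using h.hasDerivAt_flux

lemma const_mul (h : IsRadialPoisson α R v f) (c : ℝ) :
    IsRadialPoisson α R (fun r => c * v r) (fun r => c * f r) where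
  continuousOn := continuousOn_const.mul h.continuousOn
  differentiableAt r hr := (h.differentiableAt r hr).const_mul c
  continuousOn_flux := by
    simpa only [deriv_const_mul_field, mul_left_comm] using h.continuousOn_flux.const_mul c
  hasDerivAt_flux r hr := by
    simpa only [deriv_const_mul_field, mul_left_comm] using (h.hasDerivAt_flux r hr).const_mul c

lemma neg (h : IsRadialPoisson α R v f) : IsRadialPoisson α R (fun r => -v r) (fun r => -f r) := by
  simpa only [neg_one_mul] using h.const_mul (-1)

lemma sub (hv : IsRadialPoisson α R v f) (hw : IsRadialPoisson α R w g) :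
    IsRadialPoisson α R (fun r => v r - w r) (fun r => f r - g r) := by
  have hflux : EqOn (fun r => r * deriv (fun r => v r - w r) r)
      (fun r => r * deriv v r - r * deriv w r) (Ico 0 R) := by
    intro r hr
    rcases hr.1.eq_or_lt with rfl | hr0
    · simp
    · have hr' : r ∈ Ioo 0 R := ⟨hr0, hr.2⟩
      simp only [deriv_fun_sub (hv.differentiableAt r hr') (hw.differentiableAt r hr'), mul_sub]
  refine ⟨hv.continuousOn.sub hw.continuousOn,
    fun r hr => (hv.differentiableAt r hr).sub (hw.differentiableAt r hr),
    (hv.continuousOn_flux.sub hw.continuousOn_flux).congr hflux, fun r hr => ?_⟩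
  rw [mul_sub]
  exact ((hv.hasDerivAt_flux r hr).sub (hw.hasDerivAt_flux r hr)).congr_of_eventuallyEq
    (hflux.eventuallyEq_of_mem (Ico_mem_nhds hr.1 hr.2))

lemma comp_mul_left (h : IsRadialPoisson α R v f) {ρ : ℝ} (hρ : 0 < ρ) :
    IsRadialPoisson α (R / ρ) (fun r => v (ρ * r)) (fun r => ρ ^ (2 + α) * f (ρ * r)) := by
  have hflux : (fun r => r * deriv (fun r => v (ρ * r)) r) =
      fun r => ρ * r * deriv v (ρ * r) := by
    ext r
    rw [deriv_comp_mul_left, smul_eq_mul]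
    ring
  have hIcc : MapsTo (ρ * ·) (Icc 0 (R / ρ)) (Icc 0 R) := fun r hr =>
    ⟨mul_nonneg hρ.le hr.1, (le_div_iff₀' hρ).1 hr.2⟩
  have hIco : MapsTo (ρ * ·) (Ico 0 (R / ρ)) (Ico 0 R) := fun r hr =>
    ⟨mul_nonneg hρ.le hr.1, (lt_div_iff₀' hρ).1 hr.2⟩
  have hIoo : MapsTo (ρ * ·) (Ioo 0 (R / ρ)) (Ioo 0 R) := fun r hr =>
    ⟨mul_pos hρ hr.1, (lt_div_iff₀' hρ).1 hr.2⟩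
  have hlin (r : ℝ) : HasDerivAt (ρ * ·) ρ r := by simpa using (hasDerivAt_id r).const_mul ρ
  refine ⟨h.continuousOn.comp (by fun_prop) hIcc,
    fun r hr => (h.differentiableAt _ (hIoo hr)).comp r (hlin r).differentiableAt,
    hflux ▸ h.continuousOn_flux.comp (by fun_prop) hIco, fun r hr => ?_⟩
  rw [hflux]
  refine ((h.hasDerivAt_flux _ (hIoo hr)).comp r (hlin r)).congr_deriv ?_
  rw [mul_rpow hρ.le hr.1.le, show 2 + α = 1 + α + 1 by ring, rpow_add_one hρ.ne']
  ring

lemma of_contDiffOn (hR : 0 < R) (hv₁ : ContDiffOn ℝ 1 v (Icc 0 R))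
    (hv₂ : ContDiffOn ℝ 2 v (Ioo 0 R))
    (heq : ∀ r ∈ Ioo 0 R, deriv (fun s => s * deriv v s) r = r ^ (1 + α) * f r) :
    IsRadialPoisson α R v f where
  continuousOn := hv₁.continuousOn
  differentiableAt r hr :=
    (hv₁.differentiableOn one_ne_zero).differentiableAt (Icc_mem_nhds hr.1 hr.2)
  continuousOn_flux := by
    have hd : ContinuousOn (derivWithin v (Icc 0 R)) (Ico 0 R) :=
      (hv₁.continuousOn_derivWithin (uniqueDiffOn_Icc hR) le_rfl).mono Ico_subset_Icc_self
    refine (continuousOn_id.mul hd).congr fun r hr => ?_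
    rcases hr.1.eq_or_lt with rfl | hr0
    · simp
    · simp [derivWithin_of_mem_nhds (Icc_mem_nhds hr0 hr.2)]
  hasDerivAt_flux r hr := by
    have hd : DifferentiableAt ℝ (deriv v) r :=
      ((hv₂.deriv_of_isOpen (m := 1) isOpen_Ioo (by norm_num)).differentiableOn
        one_ne_zero).differentiableAt (Ioo_mem_nhds hr.1 hr.2)
    exact heq r hr ▸ (differentiableAt_fun_id.mul hd).hasDerivAt

lemma deriv_nonneg (h : IsRadialPoisson α R v f) (hf : ∀ r ∈ Ioo 0 R, 0 ≤ f r) :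
    ∀ r ∈ Ioo 0 R, 0 ≤ deriv v r := by
  have hmono : MonotoneOn (fun r => r * deriv v r) (Ico 0 R) := by
    refine monotoneOn_of_deriv_nonneg (convex_Ico 0 R) h.continuousOn_flux ?_ ?_ <;>
      rw [interior_Ico]
    · exact fun r hr => (h.hasDerivAt_flux r hr).differentiableAt.differentiableWithinAt
    · intro r hr
      rw [(h.hasDerivAt_flux r hr).deriv]
      exact mul_nonneg (rpow_nonneg hr.1.le _) (hf r hr)
  intro r hr
  have hflux := hmono (left_mem_Ico.2 (hr.1.trans hr.2)) (Ioo_subset_Ico_self hr) hr.1.le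
  simp only [zero_mul] at hflux
  exact nonneg_of_mul_nonneg_right hflux hr.1

lemma apply_zero_le (h : IsRadialPoisson α R v f) (hf : ∀ r ∈ Ioo 0 R, 0 ≤ f r) :
    ∀ r ∈ Icc 0 R, v 0 ≤ v r := by
  have hmono : MonotoneOn v (Icc 0 R) := by
    refine monotoneOn_of_deriv_nonneg (convex_Icc 0 R) h.continuousOn ?_ ?_ <;> rw [interior_Icc]
    · exact fun r hr => (h.differentiableAt r hr).differentiableWithinAt
    · exact h.deriv_nonneg hf
  exact fun r hr => hmono (left_mem_Icc.2 (hr.1.trans hr.2)) hr hr.1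

lemma deriv_le_deriv (hv : IsRadialPoisson α R v f) (hw : IsRadialPoisson α R w g)
    (hfg : ∀ r ∈ Ioo 0 R, f r ≤ g r) : ∀ r ∈ Ioo 0 R, deriv v r ≤ deriv w r := by
  intro r hr
  have h := (hw.sub hv).deriv_nonneg (fun s hs => sub_nonneg.2 (hfg s hs)) r hr
  rwa [deriv_fun_sub (hw.differentiableAt r hr) (hv.differentiableAt r hr), sub_nonneg] at h

lemma sub_apply_zero_le (hv : IsRadialPoisson α R v f) (hw : IsRadialPoisson α R w g)
    (hfg : ∀ r ∈ Ioo 0 R, f r ≤ g r) : ∀ r ∈ Icc 0 R, v r - v 0 ≤ w r - w 0 := by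
  intro r hr
  linarith [(hw.sub hv).apply_zero_le (fun s hs => sub_nonneg.2 (hfg s hs)) r hr]

lemma abs_deriv_le (hv : IsRadialPoisson α R v f) (hw : IsRadialPoisson α R w g)
    (hfg : ∀ r ∈ Ioo 0 R, |f r| ≤ g r) : ∀ r ∈ Ioo 0 R, |deriv v r| ≤ deriv w r := by
  intro r hr
  have hneg := hv.neg.deriv_le_deriv hw (fun s hs => (abs_le'.1 (hfg s hs)).2) r hr
  rw [deriv.fun_neg] at hneg
  exact abs_le'.2 ⟨hv.deriv_le_deriv hw (fun s hs => (abs_le'.1 (hfg s hs)).1) r hr, hneg⟩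

lemma abs_sub_apply_zero_le (hv : IsRadialPoisson α R v f) (hw : IsRadialPoisson α R w g)
    (hfg : ∀ r ∈ Ioo 0 R, |f r| ≤ g r) : ∀ r ∈ Icc 0 R, |v r - v 0| ≤ w r - w 0 := by
  intro r hr
  have hneg := hv.neg.sub_apply_zero_le hw (fun s hs => (abs_le'.1 (hfg s hs)).2) r hr
  refine abs_le'.2 ⟨hv.sub_apply_zero_le hw (fun s hs => (abs_le'.1 (hfg s hs)).1) r hr, ?_⟩
  linarith

end IsRadialPoisson

lemma hasDerivAt_comp_rpow_const {φ : ℝ → ℝ} {φ' b r : ℝ} (hφ : HasDerivAt φ φ' (r ^ b))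
    (h : r ≠ 0 ∨ 1 ≤ b) : HasDerivAt (fun s => φ (s ^ b)) (φ' * (b * r ^ (b - 1))) r :=
  hφ.comp r (hasDerivAt_rpow_const h)

lemma deriv_comp_rpow_const_zero {φ : ℝ → ℝ} {b : ℝ} (hφ : DifferentiableAt ℝ φ 0) (hb : 1 < b) :
    deriv (fun s => φ (s ^ b)) 0 = 0 := by
  have hb0 : (0 : ℝ) ^ b = 0 := zero_rpow (by linarith)
  rw [(hasDerivAt_comp_rpow_const (hb0.symm ▸ hφ.hasDerivAt) (Or.inr hb.le)).deriv,
    zero_rpow (sub_pos.2 hb).ne', mul_zero, mul_zero]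

/-- In the variable `t = r ^ (2 + α)` the operator `r ^ (-1 - α) (r v')'` is
`(2 + α) ^ 2 (φ' + t φ'')`. -/
lemma isRadialPoisson_comp_rpow {α : ℝ} (hα : -2 < α) (R : ℝ) {φ φ' φ'' : ℝ → ℝ}
    (hφ : ∀ t, 0 ≤ t → HasDerivAt φ (φ' t) t) (hφ' : ∀ t, 0 ≤ t → HasDerivAt φ' (φ'' t) t) :
    IsRadialPoisson α R (fun r => φ (r ^ (2 + α)))
      (fun r => (2 + α) ^ 2 * (φ' (r ^ (2 + α)) + r ^ (2 + α) * φ'' (r ^ (2 + α)))) := by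
  have hb : 0 < 2 + α := by linarith
  have hd (r : ℝ) (hr : 0 < r) : HasDerivAt (fun r => φ (r ^ (2 + α)))
      (φ' (r ^ (2 + α)) * ((2 + α) * r ^ (2 + α - 1))) r :=
    hasDerivAt_comp_rpow_const (hφ _ (rpow_nonneg hr.le _)) (Or.inl hr.ne')
  have hΦ (t : ℝ) (ht : 0 ≤ t) : HasDerivAt (fun t => (2 + α) * (t * φ' t))
      ((2 + α) * (φ' t + t * φ'' t)) t := by
    simpa using ((hasDerivAt_id t).mul (hφ' t ht)).const_mul (2 + α)
  have hflux : EqOn (fun r => r * deriv (fun r => φ (r ^ (2 + α))) r)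
      (fun r => (2 + α) * (r ^ (2 + α) * φ' (r ^ (2 + α)))) (Ici 0) := by
    intro r hr
    rcases (mem_Ici.1 hr).eq_or_lt with rfl | hr0
    · simp [zero_rpow hb.ne']
    · simp only [(hd r hr0).deriv, rpow_sub_one hr0.ne']
      field_simp
  have hcont {ψ : ℝ → ℝ} (hψ : ∀ t, 0 ≤ t → ContinuousAt ψ t) :
      ContinuousOn (fun r : ℝ => ψ (r ^ (2 + α))) (Ici 0) := fun r hr =>
    ((hψ _ (rpow_nonneg hr _)).comp (f := (· ^ (2 + α)))
      (continuousAt_rpow_const r _ (Or.inr hb.le))).continuousWithinAt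
  refine ⟨(hcont fun t ht => (hφ t ht).continuousAt).mono Icc_subset_Ici_self,
    fun r hr => (hd r hr.1).differentiableAt,
    ((hcont fun t ht => (hΦ t ht).continuousAt).congr hflux).mono Ico_subset_Ici_self,
    fun r hr => ?_⟩
  refine ((hasDerivAt_comp_rpow_const (hΦ _ (rpow_nonneg hr.1.le _))
    (Or.inl hr.1.ne')).congr_of_eventuallyEq
      (hflux.eventuallyEq_of_mem (Ici_mem_nhds hr.1))).congr_deriv ?_
  rw [show 2 + α - 1 = 1 + α by ring]
  ring

lemma isRadialPoisson_mul_rpow {α : ℝ} (hα : -2 < α) (R M : ℝ) :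
    IsRadialPoisson α R (fun r => M / (2 + α) ^ 2 * r ^ (2 + α)) fun _ => M := by
  have hb : 2 + α ≠ 0 := by linarith
  refine (isRadialPoisson_comp_rpow hα R (φ' := fun _ => M / (2 + α) ^ 2) (φ'' := fun _ => 0)
    (fun t _ => hasDerivAt_const_mul _) fun t _ => hasDerivAt_const t _).congr_right fun r _ => ?_
  simp only [mul_zero, add_zero]
  field_simp

lemma IsRadialPoisson.sub_rpow_le {α R : ℝ} {v f : ℝ → ℝ} (h : IsRadialPoisson α R v f)
    (hα : -2 < α) {M : ℝ} (hf : ∀ r ∈ Ioo 0 R, -M ≤ f r) :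
    ∀ r ∈ Icc 0 R, v 0 - M * r ^ (2 + α) / (2 + α) ^ 2 ≤ v r := by
  intro r hr
  have hle := (isRadialPoisson_mul_rpow hα R (-M)).sub_apply_zero_le h hf r hr
  rw [zero_rpow (by linarith), neg_div, neg_mul, div_mul_eq_mul_div] at hle
  linarith

/-- The barrier of the Grönwall estimate below: it starts from `1` at the centre and satisfies
`(r B')' ≥ r ^ (1 + α) (1 + L) B`. -/
noncomputable def radialBarrier (α L r : ℝ) : ℝ :=
  exp ((1 + L) / (2 + α) ^ 2 * r ^ (2 + α))

section Barrier

variable {α L : ℝ}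

lemma isRadialPoisson_radialBarrier (hα : -2 < α) (L R : ℝ) :
    IsRadialPoisson α R (radialBarrier α L) fun r =>
      (1 + L) * (1 + (1 + L) / (2 + α) ^ 2 * r ^ (2 + α)) * radialBarrier α L r := by
  have hb : 2 + α ≠ 0 := by linarith
  set c := (1 + L) / (2 + α) ^ 2 with hc
  have hexp (t : ℝ) : HasDerivAt (fun t => exp (c * t)) (c * exp (c * t)) t := by
    simpa [mul_comm] using (hasDerivAt_const_mul c).exp
  refine (isRadialPoisson_comp_rpow hα R (fun t _ => hexp t)
    fun t _ => (hexp t).const_mul c).congr_right fun r _ => ?_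
  have hL : 1 + L = (2 + α) ^ 2 * c := by rw [hc]; field_simp
  simp only [radialBarrier, ← hc]
  rw [hL]
  ring

lemma radialBarrier_zero (hα : -2 < α) (L : ℝ) : radialBarrier α L 0 = 1 := by
  simp [radialBarrier, zero_rpow (by linarith : 2 + α ≠ 0)]

lemma one_le_radialBarrier (hL : 0 ≤ L) {r : ℝ} (hr : 0 ≤ r) : 1 ≤ radialBarrier α L r :=
  one_le_exp (by positivity)

lemma radialBarrier_le_radialBarrier (hα : -2 < α) (hL : 0 ≤ L) {r s : ℝ} (hr : 0 ≤ r)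
    (hrs : r ≤ s) : radialBarrier α L r ≤ radialBarrier α L s := by
  have hpow : r ^ (2 + α) ≤ s ^ (2 + α) := rpow_le_rpow hr hrs (by linarith)
  unfold radialBarrier
  gcongr

lemma deriv_radialBarrier (hα : -2 < α) (L : ℝ) {r : ℝ} (hr : 0 < r) :
    deriv (radialBarrier α L) r = (1 + L) / (2 + α) * r ^ (1 + α) * radialBarrier α L r := by
  have hb : 2 + α ≠ 0 := by linarith
  have h : HasDerivAt (radialBarrier α L) _ r :=
    ((hasDerivAt_rpow_const (p := 2 + α) (Or.inl hr.ne')).const_mul ((1 + L) / (2 + α) ^ 2)).exp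
  rw [h.deriv, radialBarrier, show 2 + α - 1 = 1 + α by ring]
  field_simp

lemma deriv_radialBarrier_le_deriv_radialBarrier (hα : -1 ≤ α) (hL : 0 ≤ L) {r s : ℝ}
    (hr : 0 < r) (hrs : r ≤ s) : deriv (radialBarrier α L) r ≤ deriv (radialBarrier α L) s := by
  have hα' : -2 < α := by linarith
  have hb : 0 < 2 + α := by linarith
  have hs : 0 < s := hr.trans_le hrs
  have hpow : r ^ (1 + α) ≤ s ^ (1 + α) := rpow_le_rpow hr.le hrs (by linarith)
  have hB : radialBarrier α L r ≤ radialBarrier α L s :=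
    radialBarrier_le_radialBarrier hα' hL hr.le hrs
  have hB0 : 0 ≤ radialBarrier α L r := (exp_pos _).le
  rw [deriv_radialBarrier hα' L hr, deriv_radialBarrier hα' L hs]
  gcongr

end Barrier

namespace IsRadialPoisson

variable {α R L ε : ℝ} {v f : ℝ → ℝ}

lemma abs_deriv_le_and_abs_le_of_abs_le_mul_radialBarrier (h : IsRadialPoisson α R v f)
    (hα : -2 < α) (hL : 0 ≤ L) (hε : 0 ≤ ε) (hv0 : v 0 = 0)
    (hf : ∀ r ∈ Ioo 0 R, |f r| ≤ ε + L * |v r|) {κ : ℝ} (hεκ : ε ≤ κ)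
    (hv : ∀ r ∈ Icc 0 R, |v r| ≤ κ * radialBarrier α L r) :
    (∀ r ∈ Ioo 0 R, |deriv v r| ≤ κ * deriv (radialBarrier α L) r) ∧
      ∀ r ∈ Icc 0 R, |v r| ≤ κ * (radialBarrier α L r - 1) := by
  have hκ : 0 ≤ κ := hε.trans hεκ
  have hB := (isRadialPoisson_radialBarrier hα L R).const_mul κ
  have hfB : ∀ r ∈ Ioo 0 R, |f r| ≤
      κ * ((1 + L) * (1 + (1 + L) / (2 + α) ^ 2 * r ^ (2 + α)) * radialBarrier α L r) := by
    intro r hr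
    have hB1 : 1 ≤ radialBarrier α L r := one_le_radialBarrier hL hr.1.le
    have hr0 : 0 ≤ r := hr.1.le
    calc |f r| ≤ ε + L * |v r| := hf r hr
      _ ≤ κ * radialBarrier α L r + L * (κ * radialBarrier α L r) := by
        gcongr
        · exact hεκ.trans (le_mul_of_one_le_right hκ hB1)
        · exact hv r (Ioo_subset_Icc_self hr)
      _ = κ * ((1 + L) * 1 * radialBarrier α L r) := by ring
      _ ≤ _ := by
        gcongr
        exact le_add_of_nonneg_right (by positivity)
  refine ⟨fun r hr => ?_, fun r hr => ?_⟩
  · simpa only [deriv_const_mul_field] using h.abs_deriv_le hB hfB r hr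
  · simpa [hv0, radialBarrier_zero hα, mul_sub] using h.abs_sub_apply_zero_le hB hfB r hr

/-- Where `|v| / B` attains its maximum `κ`, the assumption `κ > ε` would improve the bound `κ B`
to `κ (B - 1)`. -/
lemma abs_le_mul_radialBarrier (h : IsRadialPoisson α R v f) (hα : -2 < α) (hL : 0 ≤ L)
    (hε : 0 ≤ ε) (hv0 : v 0 = 0) (hf : ∀ r ∈ Ioo 0 R, |f r| ≤ ε + L * |v r|) :
    ∀ r ∈ Icc 0 R, |v r| ≤ ε * radialBarrier α L r := by
  intro r hr
  have hBpos (s : ℝ) : 0 < radialBarrier α L s := exp_pos _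
  obtain ⟨s, hs, hmax⟩ := isCompact_Icc.exists_isMaxOn ⟨r, hr⟩
    (h.continuousOn.abs.div (isRadialPoisson_radialBarrier hα L R).continuousOn
      fun s _ => (hBpos s).ne')
  set κ := |v s| / radialBarrier α L s
  have hvκ : ∀ t ∈ Icc 0 R, |v t| ≤ κ * radialBarrier α L t := fun t ht =>
    (div_le_iff₀ (hBpos t)).1 (hmax ht)
  suffices hκε : κ ≤ ε from (hvκ r hr).trans (mul_le_mul_of_nonneg_right hκε (hBpos r).le)
  by_contra! hεκ
  have hs' := (h.abs_deriv_le_and_abs_le_of_abs_le_mul_radialBarrier hα hL hε hv0 hf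
    hεκ.le hvκ).2 s hs
  have hvs : |v s| = κ * radialBarrier α L s := (div_mul_cancel₀ _ (hBpos s).ne').symm
  linarith

lemma abs_deriv_le_mul_deriv_radialBarrier (h : IsRadialPoisson α R v f) (hα : -2 < α)
    (hL : 0 ≤ L) (hε : 0 ≤ ε) (hv0 : v 0 = 0) (hf : ∀ r ∈ Ioo 0 R, |f r| ≤ ε + L * |v r|) :
    ∀ r ∈ Ioo 0 R, |deriv v r| ≤ ε * deriv (radialBarrier α L) r :=
  (h.abs_deriv_le_and_abs_le_of_abs_le_mul_radialBarrier hα hL hε hv0 hf le_rfl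
    (h.abs_le_mul_radialBarrier hα hL hε hv0 hf)).1

end IsRadialPoisson

/-- The limit profile `U` of the rescalings, a radial solution of the singular Liouville equation
`-ΔU = |x| ^ α exp U` in the plane, normalized by `U 0 = 0`. -/
noncomputable def henonBubble (α r : ℝ) : ℝ :=
  log (4 * (2 + α) ^ 4 / (2 * (2 + α) ^ 2 + r ^ (2 + α)) ^ 2)

section Bubble

variable {α : ℝ}

lemma hasDerivAt_log_const_div_sq {a b t : ℝ} (ha : a ≠ 0) (hbt : b + t ≠ 0) :
    HasDerivAt (fun t => log (a / (b + t) ^ 2)) (-2 / (b + t)) t := by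
  have hd : HasDerivAt (fun t => a / (b + t) ^ 2) _ t :=
    (hasDerivAt_const t a).div (((hasDerivAt_id t).const_add b).pow 2) (pow_ne_zero 2 hbt)
  refine (hd.log (div_ne_zero ha (pow_ne_zero 2 hbt))).congr_deriv ?_
  simp only [id]
  field_simp
  ring

lemma hasDerivAt_const_div_const_add {a b t : ℝ} (hbt : b + t ≠ 0) :
    HasDerivAt (fun t => a / (b + t)) (-a / (b + t) ^ 2) t := by
  simpa using (hasDerivAt_const t a).fun_div ((hasDerivAt_id t).const_add b) hbt

lemma isRadialPoisson_henonBubble (hα : -2 < α) (R : ℝ) :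
    IsRadialPoisson α R (henonBubble α) fun r => -exp (henonBubble α r) := by
  have hb : 0 < 2 + α := by linarith
  have hD (t : ℝ) (ht : 0 ≤ t) : 2 * (2 + α) ^ 2 + t ≠ 0 := by positivity
  refine (isRadialPoisson_comp_rpow hα R
    (fun t ht => hasDerivAt_log_const_div_sq (by positivity) (hD t ht))
    fun t ht => hasDerivAt_const_div_const_add (hD t ht)).congr_right fun r hr => ?_
  have ht : 0 ≤ r ^ (2 + α) := rpow_nonneg hr.1.le _
  simp only [henonBubble]
  rw [exp_log (by positivity)]
  field_simp
  ring

lemma henonBubble_zero (hα : -2 < α) : henonBubble α 0 = 0 := by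
  have hb : 2 + α ≠ 0 := by linarith
  rw [henonBubble, zero_rpow hb, add_zero,
    show 4 * (2 + α) ^ 4 / (2 * (2 + α) ^ 2) ^ 2 = 1 by field_simp; ring, log_one]

lemma deriv_henonBubble_zero (hα : -1 < α) : deriv (henonBubble α) 0 = 0 := by
  have hb : 0 < 2 + α := by linarith
  exact deriv_comp_rpow_const_zero (hasDerivAt_log_const_div_sq (a := 4 * (2 + α) ^ 4)
    (by positivity) (by positivity)).differentiableAt (by linarith)

lemma henonBubble_nonpos (hα : -2 < α) {r : ℝ} (hr : 0 ≤ r) : henonBubble α r ≤ 0 := by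
  have h := (isRadialPoisson_henonBubble hα r).neg.apply_zero_le
    (fun s _ => by simpa using (exp_pos _).le) r ⟨hr, le_rfl⟩
  simpa [henonBubble_zero hα] using h

end Bubble

/-- The scale `ρ = (p |m| ^ (p - 1)) ^ (-1 / (2 + α))` attached to the exponent `p` and to an
extremal value `m` of the solution. -/
noncomputable def henonScale (α p m : ℝ) : ℝ :=
  (p * |m| ^ (p - 1)) ^ (-(1 / (2 + α)))

/-- The rescaling `ũ r = p (u (ρ r) - u 0) / u 0` of `u` around the centre, where `ρ` is the scale
attached to `u 0`. -/
noncomputable def henonRescaling (α p : ℝ) (u : ℝ → ℝ) (r : ℝ) : ℝ :=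
  p * (u (henonScale α p (u 0) * r) - u 0) / u 0

lemma henonRescaling_zero (α p : ℝ) (u : ℝ → ℝ) : henonRescaling α p u 0 = 0 := by
  simp [henonRescaling]

/-- The error `C ^ 2 / (p - C)` of the approximation of `exp v` by `(1 + v / p) ^ p` for
`-C ≤ v ≤ 0`, where `-C` is the a priori lower bound for the rescalings on `[0, R]`. -/
noncomputable def rescalingError (α R p : ℝ) : ℝ :=
  (R ^ (2 + α) / (2 + α) ^ 2) ^ 2 / (p - R ^ (2 + α) / (2 + α) ^ 2)

lemma rescalingError_nonneg {α R p : ℝ} (hp : R ^ (2 + α) / (2 + α) ^ 2 < p) :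
    0 ≤ rescalingError α R p :=
  div_nonneg (sq_nonneg _) (sub_nonneg.2 hp.le)

lemma tendsto_rescalingError (α R : ℝ) : Tendsto (rescalingError α R) atTop (𝓝 0) :=
  (tendsto_atTop_add_const_right _ _ tendsto_id).const_div_atTop _

/-- `u` is, on `[0, R]`, the profile of a positive radial solution of `-Δu = |x| ^ α u ^ p` in the
disc of radius `R` that vanishes on the boundary: a ground state, or the first nodal zone of a
sign-changing solution. `deriv` being two-sided, `deriv_zero` also fixes the convention for the
derivative at the centre. -/
structure IsPositiveHenonSolution (α p R : ℝ) (u : ℝ → ℝ) : Prop extends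
    IsRadialPoisson α R u (fun r => -u r ^ p) where
  radius_pos : 0 < R
  pos : ∀ r ∈ Ico 0 R, 0 < u r
  eq_zero : u R = 0
  deriv_zero : deriv u 0 = 0

section Scale

variable {α p m : ℝ}

lemma henonScale_pos (hp : 0 < p) (hm : m ≠ 0) : 0 < henonScale α p m := by
  have := abs_pos.2 hm
  unfold henonScale
  positivity

lemma henonScale_rpow (hα : 2 + α ≠ 0) (hp : 0 < p) :
    henonScale α p m ^ (2 + α) = (p * |m| ^ (p - 1))⁻¹ := by
  rw [henonScale, ← rpow_mul (by positivity), neg_mul, one_div_mul_cancel hα, rpow_neg_one]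

end Scale

namespace IsPositiveHenonSolution

variable {α p S R : ℝ} {u : ℝ → ℝ}

lemma apply_zero_pos (h : IsPositiveHenonSolution α p S u) : 0 < u 0 :=
  h.pos 0 ⟨le_rfl, h.radius_pos⟩

lemma scale_pos (h : IsPositiveHenonSolution α p S u) (hp : 0 < p) :
    0 < henonScale α p (u 0) :=
  henonScale_pos hp h.apply_zero_pos.ne'

lemma one_add_rescaling_div (h : IsPositiveHenonSolution α p S u) (hp : 0 < p) (r : ℝ) :
    1 + henonRescaling α p u r / p = u (henonScale α p (u 0) * r) / u 0 := by
  have hm := h.apply_zero_pos.ne'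
  rw [henonRescaling]
  field_simp
  ring

lemma one_add_rescaling_div_pos (h : IsPositiveHenonSolution α p S u) (hp : 0 < p) :
    ∀ r ∈ Ioo 0 (S / henonScale α p (u 0)), 0 < 1 + henonRescaling α p u r / p := by
  intro r hr
  have hρ := h.scale_pos hp
  rw [h.one_add_rescaling_div hp]
  exact div_pos (h.pos _ ⟨(mul_pos hρ hr.1).le, (lt_div_iff₀' hρ).1 hr.2⟩) h.apply_zero_pos

lemma isRadialPoisson_rescaling (h : IsPositiveHenonSolution α p S u) (hα : 2 + α ≠ 0)
    (hp : 0 < p) :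
    IsRadialPoisson α (S / henonScale α p (u 0)) (henonRescaling α p u)
      fun r => -(1 + henonRescaling α p u r / p) ^ p := by
  have hm := h.apply_zero_pos
  have hρ := h.scale_pos hp
  have hscaled := ((h.comp_mul_left hρ).sub_const (u 0)).const_mul (p / u 0)
  simp only [← mul_div_right_comm] at hscaled
  refine hscaled.congr_right fun r hr => ?_
  have hur : 0 < u (henonScale α p (u 0) * r) :=
    h.pos _ ⟨(mul_pos hρ hr.1).le, (lt_div_iff₀' hρ).1 hr.2⟩
  simp only [h.one_add_rescaling_div hp, henonScale_rpow hα hp, div_rpow hur.le hm.le,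
    abs_of_pos hm, rpow_sub_one hm.ne']
  field_simp

lemma deriv_rescaling_zero (h : IsPositiveHenonSolution α p S u) :
    deriv (henonRescaling α p u) 0 = 0 := by
  have hcomp : deriv (fun r => u (henonScale α p (u 0) * r)) 0 = 0 := by
    rw [deriv_comp_mul_left, mul_zero, h.deriv_zero, smul_zero]
  change deriv (fun r => p * (u (henonScale α p (u 0) * r) - u 0) / u 0) 0 = 0
  rw [deriv_div_const, deriv_const_mul_field, deriv_sub_const, hcomp, mul_zero, zero_div]

lemma rescaling_nonpos (h : IsPositiveHenonSolution α p S u) (hα : 2 + α ≠ 0) (hp : 0 < p) :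
    ∀ r ∈ Icc 0 (S / henonScale α p (u 0)), henonRescaling α p u r ≤ 0 := by
  intro r hr
  have hle := (h.isRadialPoisson_rescaling hα hp).neg.apply_zero_le
    (fun s hs => by simpa using rpow_nonneg (h.one_add_rescaling_div_pos hp s hs).le p) r hr
  simpa [henonRescaling_zero] using hle

lemma neg_rpow_le_rescaling (h : IsPositiveHenonSolution α p S u) (hα : -2 < α) (hp : 0 < p) :
    ∀ r ∈ Icc 0 (S / henonScale α p (u 0)),
      -(r ^ (2 + α) / (2 + α) ^ 2) ≤ henonRescaling α p u r := by
  intro r hr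
  have hb : 2 + α ≠ 0 := by linarith
  have hle := (h.isRadialPoisson_rescaling hb hp).sub_rpow_le hα (M := 1) (fun s hs => ?_) r hr
  · simpa [henonRescaling_zero] using hle
  · have hs0 := h.rescaling_nonpos hb hp s (Ioo_subset_Icc_self hs)
    exact neg_le_neg <| rpow_le_one (h.one_add_rescaling_div_pos hp s hs).le
      (by linarith [div_nonpos_of_nonpos_of_nonneg hs0 hp.le]) hp.le

/-- At the rescaled zero of `u` the rescaling equals `-p`, which the a priori lower bound only
allows far away. -/
lemma lt_div_scale (h : IsPositiveHenonSolution α p S u) (hα : -2 < α) (hR : 0 ≤ R)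
    (hp : R ^ (2 + α) / (2 + α) ^ 2 < p) : R < S / henonScale α p (u 0) := by
  have hp0 : 0 < p := lt_of_le_of_lt (by positivity) hp
  have hb : 0 < 2 + α := by linarith
  have hρ := h.scale_pos hp0
  have hS : 0 ≤ S / henonScale α p (u 0) := (div_pos h.radius_pos hρ).le
  have hval : henonRescaling α p u (S / henonScale α p (u 0)) = -p := by
    rw [henonRescaling, mul_div_cancel₀ _ hρ.ne', h.eq_zero, zero_sub, mul_neg, neg_div,
      mul_div_cancel_right₀ _ h.apply_zero_pos.ne']
  have hle := h.neg_rpow_le_rescaling hα hp0 _ ⟨hS, le_rfl⟩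
  rw [hval, neg_le_neg_iff] at hle
  refine (rpow_lt_rpow_iff hR hS hb).1 ?_
  exact (div_lt_div_iff_of_pos_right (by positivity)).1 (hp.trans_le hle)

lemma isRadialPoisson_rescaling_sub_bubble (h : IsPositiveHenonSolution α p S u) (hα : -2 < α)
    (hR : 0 ≤ R) (hp : R ^ (2 + α) / (2 + α) ^ 2 < p) :
    IsRadialPoisson α R (fun r => henonRescaling α p u r - henonBubble α r)
      fun r => -(1 + henonRescaling α p u r / p) ^ p - -exp (henonBubble α r) :=
  ((h.isRadialPoisson_rescaling (by linarith) (lt_of_le_of_lt (by positivity) hp)).mono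
    (h.lt_div_scale hα hR hp).le).sub (isRadialPoisson_henonBubble hα R)

lemma abs_rpow_sub_exp_rescaling_le (h : IsPositiveHenonSolution α p S u) (hα : -2 < α)
    (hR : 0 ≤ R) (hp : R ^ (2 + α) / (2 + α) ^ 2 < p) : ∀ r ∈ Ioo 0 R,
      |(1 + henonRescaling α p u r / p) ^ p - exp (henonRescaling α p u r)| ≤
        rescalingError α R p := by
  intro r hr
  have hp0 : 0 < p := lt_of_le_of_lt (by positivity) hp
  have hrS : r ∈ Icc 0 (S / henonScale α p (u 0)) :=
    ⟨hr.1.le, (hr.2.trans (h.lt_div_scale hα hR hp)).le⟩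
  have hpow : r ^ (2 + α) / (2 + α) ^ 2 ≤ R ^ (2 + α) / (2 + α) ^ 2 :=
    div_le_div_of_nonneg_right (rpow_le_rpow hr.1.le hr.2.le (by linarith)) (sq_nonneg _)
  have hle := h.rescaling_nonpos (by linarith) hp0 r hrS
  have hge := (neg_le_neg hpow).trans (h.neg_rpow_le_rescaling hα hp0 r hrS)
  refine (abs_one_add_div_rpow_sub_exp_le hp0 (by linarith) hle).trans ?_
  exact div_le_div₀ (sq_nonneg _) (by nlinarith) (by linarith) (by linarith)

lemma abs_rhs_rescaling_sub_bubble_le (h : IsPositiveHenonSolution α p S u) (hα : -2 < α)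
    (hR : 0 ≤ R) (hp : R ^ (2 + α) / (2 + α) ^ 2 < p) : ∀ r ∈ Ioo 0 R,
      |-(1 + henonRescaling α p u r / p) ^ p - -exp (henonBubble α r)| ≤
        rescalingError α R p + 1 * |henonRescaling α p u r - henonBubble α r| := by
  intro r hr
  have hp0 : 0 < p := lt_of_le_of_lt (by positivity) hp
  have hle := h.rescaling_nonpos (by linarith) hp0 r
    ⟨hr.1.le, (hr.2.trans (h.lt_div_scale hα hR hp)).le⟩
  rw [neg_sub_neg, abs_sub_comm, one_mul]
  exact (abs_sub_le _ (exp (henonRescaling α p u r)) _).trans <|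
    add_le_add (h.abs_rpow_sub_exp_rescaling_le hα hR hp r hr)
      (abs_exp_sub_exp_le_of_nonpos hle (henonBubble_nonpos hα hr.1.le))

lemma abs_rescaling_sub_bubble_le (h : IsPositiveHenonSolution α p S u) (hα : -2 < α)
    (hR : 0 ≤ R) (hp : R ^ (2 + α) / (2 + α) ^ 2 < p) : ∀ r ∈ Icc 0 R,
      |henonRescaling α p u r - henonBubble α r| ≤
        rescalingError α R p * radialBarrier α 1 R := by
  intro r hr
  have hε := rescalingError_nonneg hp
  refine ((h.isRadialPoisson_rescaling_sub_bubble hα hR hp).abs_le_mul_radialBarrier hα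
    zero_le_one hε (by simp [henonRescaling_zero, henonBubble_zero hα])
    (h.abs_rhs_rescaling_sub_bubble_le hα hR hp) r hr).trans ?_
  gcongr
  exact radialBarrier_le_radialBarrier hα zero_le_one hr.1 hr.2

lemma abs_deriv_rescaling_sub_deriv_bubble_le (h : IsPositiveHenonSolution α p S u)
    (hα : -1 < α) (hR : 0 ≤ R) (hp : R ^ (2 + α) / (2 + α) ^ 2 < p) : ∀ r ∈ Ico 0 R,
      |deriv (henonRescaling α p u) r - deriv (henonBubble α) r| ≤
        rescalingError α R p * deriv (radialBarrier α 1) R := by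
  intro r hr
  have hα' : -2 < α := by linarith
  have hb : 0 < 2 + α := by linarith
  have hε := rescalingError_nonneg hp
  rcases hr.1.eq_or_lt with rfl | hr0
  · have hB : 0 < radialBarrier α 1 R := exp_pos _
    rw [h.deriv_rescaling_zero, deriv_henonBubble_zero hα, sub_self, abs_zero,
      deriv_radialBarrier hα' 1 hr.2]
    positivity
  have hrR : r ∈ Ioo 0 R := ⟨hr0, hr.2⟩
  have hv := (h.isRadialPoisson_rescaling hb.ne' (lt_of_le_of_lt (by positivity) hp)).mono
    (h.lt_div_scale hα' hR hp).le
  rw [← deriv_fun_sub (hv.differentiableAt r hrR)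
    ((isRadialPoisson_henonBubble hα' R).differentiableAt r hrR)]
  refine ((h.isRadialPoisson_rescaling_sub_bubble hα' hR hp).abs_deriv_le_mul_deriv_radialBarrier
    hα' zero_le_one hε (by simp [henonRescaling_zero, henonBubble_zero hα'])
    (h.abs_rhs_rescaling_sub_bubble_le hα' hR hp) r hrR).trans ?_
  gcongr
  exact deriv_radialBarrier_le_deriv_radialBarrier hα.le zero_le_one hr0 hr.2.le

lemma of_contDiffOn (hS : 0 < S) (hu₁ : ContDiffOn ℝ 1 u (Icc 0 S))
    (hu₂ : ContDiffOn ℝ 2 u (Ioo 0 S))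
    (heq : ∀ r ∈ Ioo 0 S,
      deriv (fun s => s * deriv u s) r + r ^ (1 + α) * |u r| ^ (p - 1) * u r = 0)
    (hpos : ∀ r ∈ Ico 0 S, 0 < u r) (hS0 : u S = 0) (hderiv0 : deriv u 0 = 0) :
    IsPositiveHenonSolution α p S u where
  __ := IsRadialPoisson.of_contDiffOn (α := α) (f := fun r => -u r ^ p) hS hu₁ hu₂ fun r hr => by
    have hur := hpos r ⟨hr.1.le, hr.2⟩
    have hpow : |u r| ^ (p - 1) * u r = u r ^ p := by
      rw [abs_of_pos hur, rpow_sub_one hur.ne', div_mul_cancel₀ _ hur.ne']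
    rw [mul_neg, ← hpow]
    linarith [heq r hr]
  radius_pos := hS
  pos := hpos
  eq_zero := hS0
  deriv_zero := hderiv0

lemma of_first_nodal_zone {z : ℝ} (hz : z ∈ Ioo 0 S)
    (hu₁ : ContDiffOn ℝ 1 u (Icc 0 S)) (hu₂ : ContDiffOn ℝ 2 u (Ioo 0 S))
    (heq : ∀ r ∈ Ioo 0 S,
      deriv (fun s => s * deriv u s) r + r ^ (1 + α) * |u r| ^ (p - 1) * u r = 0)
    (hderiv0 : deriv u 0 = 0) (hpos : ∀ r ∈ Ico 0 z, 0 < u r) (hneg : ∀ r ∈ Ioo z S, u r < 0) :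
    IsPositiveHenonSolution α p z u := by
  have hIoo : Ioo 0 z ⊆ Ioo 0 S := Ioo_subset_Ioo_right hz.2.le
  have huz : u z = 0 := by
    refine eq_zero_of_eventually_nonneg_of_eventually_nonpos
      (hu₁.continuousOn.continuousAt (Icc_mem_nhds hz.1 hz.2)) ?_ ?_
    · filter_upwards [Ico_mem_nhdsLT hz.1] with r hr using (hpos r hr).le
    · filter_upwards [Ioo_mem_nhdsGT hz.2] with r hr using (hneg r hr).le
  exact .of_contDiffOn hz.1 (hu₁.mono (Icc_subset_Icc_right hz.2.le)) (hu₂.mono hIoo)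
    (fun r hr => heq r (hIoo hr)) hpos huz hderiv0

end IsPositiveHenonSolution

theorem henon_nodal_first_rescaling_convergence_general {α : ℝ} (hα : -1 < α) {u : ℝ → ℝ → ℝ}
    {z S : ℝ → ℝ} (hu : ∀ᶠ p in atTop, IsPositiveHenonSolution α p (z p) (u p) ∧ z p ≤ S p)
    {K : Set ℝ} (hK : BddAbove K) (hK0 : K ⊆ Ici 0) :
    (∃ pK : ℝ, ∀ p > pK, ∀ r ∈ K, r < S p / henonScale α p (u p 0)) ∧
      TendstoUniformlyOn (fun p => henonRescaling α p (u p)) (henonBubble α) atTop K ∧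
      TendstoUniformlyOn (fun p => deriv (henonRescaling α p (u p))) (deriv (henonBubble α))
        atTop K := by
  have hα' : -2 < α := by linarith
  obtain ⟨R, hR, hKR⟩ : ∃ R : ℝ, 0 ≤ R ∧ K ⊆ Ico 0 R := by
    obtain ⟨b, hb⟩ := hK
    exact ⟨max b 0 + 1, by positivity, fun r hr =>
      ⟨hK0 hr, (hb hr).trans_lt (by linarith [le_max_left b 0])⟩⟩
  have hlarge := eventually_gt_atTop (R ^ (2 + α) / (2 + α) ^ 2)
  refine ⟨?_,
    tendstoUniformlyOn_of_dist_le (b := fun p => rescalingError α R p * radialBarrier α 1 R)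
      (by simpa using (tendsto_rescalingError α R).mul_const _) ?_,
    tendstoUniformlyOn_of_dist_le
      (b := fun p => rescalingError α R p * deriv (radialBarrier α 1) R)
      (by simpa using (tendsto_rescalingError α R).mul_const _) ?_⟩
  · obtain ⟨pK, hpK⟩ := eventually_atTop.1 (hu.and hlarge)
    refine ⟨max pK 0, fun p hp r hr => ?_⟩
    obtain ⟨⟨hup, hzS⟩, hpR⟩ := hpK p (le_of_max_le_left hp.le)
    have hρ := hup.scale_pos ((le_max_right _ _).trans_lt hp)
    calc r < R := (hKR hr).2
      _ < z p / henonScale α p (u p 0) := hup.lt_div_scale hα' hR hpR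
      _ ≤ S p / henonScale α p (u p 0) := by gcongr
  · filter_upwards [hu, hlarge] with p hup hp r hr
    exact hup.1.abs_rescaling_sub_bubble_le hα' hR hp r (Ico_subset_Icc_self (hKR hr))
  · filter_upwards [hu, hlarge] with p hup hp r hr
    exact hup.1.abs_deriv_rescaling_sub_deriv_bubble_le hα hR hp r (hKR hr)

/-- The rescalings `ũ_{1,p}(r) = p (u_p(ρ_p¹ r) - u_p(0))/u_p(0)` of the
least-energy nodal radial solution of the Hénon problem in its first nodal zone converge
in `C¹_loc([0,∞))` to `U(r) = log( 4(2+α)⁴ / (2(2+α)² + r^{2+α})² )` as `p → ∞`. -/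
theorem henon_nodal_first_rescaling_convergence
    (α : ℝ) (hα : 0 ≤ α) (u : ℝ → ℝ → ℝ) (rz σ : ℝ → ℝ) (ρ₁ ρ₂ : ℝ → ℝ)
    (hreg1 : ∀ p : ℝ, 1 < p → ContDiffOn ℝ 1 (u p) (Icc 0 1))
    (hreg2 : ∀ p : ℝ, 1 < p → ContDiffOn ℝ 2 (u p) (Ioo 0 1))
    (heq : ∀ p : ℝ, 1 < p → ∀ r ∈ Ioo (0:ℝ) 1,
      deriv (fun s => s * deriv (u p) s) r + r ^ (1 + α) * |u p r| ^ (p - 1) * u p r = 0)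
    (hderiv0 : ∀ p : ℝ, 1 < p → deriv (u p) 0 = 0)
    (hbdry : ∀ p : ℝ, 1 < p → u p 1 = 0)
    (hrz : ∀ p : ℝ, 1 < p → rz p ∈ Ioo (0:ℝ) 1)
    (hσmem : ∀ p : ℝ, 1 < p → σ p ∈ Ioo (rz p) 1)
    (hpos : ∀ p : ℝ, 1 < p → ∀ r ∈ Ico (0:ℝ) (rz p), 0 < u p r)
    (hneg : ∀ p : ℝ, 1 < p → ∀ r ∈ Ioo (rz p) 1, u p r < 0)
    (hσcrit : ∀ p : ℝ, 1 < p → deriv (u p) (σ p) = 0)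
    (hcrit : ∀ p : ℝ, 1 < p → ∀ r ∈ Ico (0:ℝ) 1, deriv (u p) r = 0 → r = 0 ∨ r = σ p)
    (hρ₁ : ∀ p : ℝ, ρ₁ p = (p * |u p 0| ^ (p - 1)) ^ (-(1 / (2 + α))))
    (hρ₂ : ∀ p : ℝ, ρ₂ p = (p * |u p (σ p)| ^ (p - 1)) ^ (-(1 / (2 + α))))
    (ut : ℝ → ℝ → ℝ)
    (hut : ∀ p r : ℝ, ut p r = p * (u p (ρ₁ p * r) - u p 0) / u p 0)
    (U : ℝ → ℝ)
    (hU : ∀ r : ℝ, U r = Real.log (4 * (2 + α) ^ 4 / (2 * (2 + α) ^ 2 + r ^ (2 + α)) ^ 2)) :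
    ∀ K : Set ℝ, IsCompact K → K ⊆ Ici 0 →
      (∃ pK : ℝ, ∀ p > pK, ∀ r ∈ K, r < 1 / ρ₁ p) ∧
      TendstoUniformlyOn (fun p r => ut p r) U atTop K ∧
      TendstoUniformlyOn (fun p r => deriv (ut p) r) (deriv U) atTop K := by
  obtain rfl : ρ₁ = fun p => henonScale α p (u p 0) := funext hρ₁
  obtain rfl : ut = fun p => henonRescaling α p (u p) := funext₂ hut
  obtain rfl : U = henonBubble α := funext hU
  refine fun K hK hK0 => henon_nodal_first_rescaling_convergence_general (S := fun _ => 1)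
    (by linarith) ((eventually_gt_atTop 1).mono fun p hp => ⟨?_, (hrz p hp).2.le⟩) hK.bddAbove hK0
  exact .of_first_nodal_zone (hrz p hp) (hreg1 p hp) (hreg2 p hp) (heq p hp) (hderiv0 p hp)
    (hpos p hp) (hneg p hp)
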